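/- arXiv:1302.3921 — 3 statements merged into one kernel-verified Lean document; each statement's English description precedes it below -/
import Mathlib

section
/- Let f_c ≥ 10 be an integer, λ_c = 1/f_c, and let T ⊂ 𝕋 be a finite set with minimum separation Δ(T) ≥ 2/f_c. Let t ∈ 𝕋 and let t_a, t_b be the two elements of T nearest to t. Then Σ_{t_k ∈ T \ {t_a, t_b}} |K(t − t_k)| ≤ 1.083. -/
open Finset

noncomputable section

/-- Wraparound (circle) distance between two real representatives of points on
the circle `𝕋 = ℝ/ℤ`. -/
def cdist (s t : ℝ) : ℝ := ‖((s - t : ℝ) : AddCircle (1 : ℝ))‖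

/-- `Δ(T) ≥ d`: the minimum separation condition for the finite set `T ⊂ 𝕋`. -/
def HasMinSep (T : Finset ℝ) (d : ℝ) : Prop :=
  ∀ s ∈ T, ∀ t ∈ T, s ≠ t → d ≤ cdist s t

/-- The 1-periodic interpolation kernel
`K(t) = [sin((f_c/2 + 1) π t) / ((f_c/2 + 1) sin (π t))]^4`, with `K = 1` at
the integers (in particular `K 0 = 1`). -/
def Kker (fc : ℕ) (t : ℝ) : ℝ :=
  if Real.sin (Real.pi * t) = 0 then 1
  else (Real.sin (((fc : ℝ) / 2 + 1) * Real.pi * t) /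
        (((fc : ℝ) / 2 + 1) * Real.sin (Real.pi * t))) ^ 4

/-- `K^{(ℓ)}`, the `ℓ`-th derivative of the kernel `K`. -/
def Kd (fc : ℕ) (ℓ : ℕ) : ℝ → ℝ := iteratedDeriv ℓ (Kker fc)

/-- `(α, β)` solves the interpolation linear system
`[[D₀, D₁], [D₁, D₂]] (α; β) = (e_{t_j}; 0)`, i.e. for every `t_l ∈ T`,
`∑_{t_k ∈ T} (α_k K(t_l - t_k) + β_k K'(t_l - t_k)) = 1_{t_l = t_j}` and
`∑_{t_k ∈ T} (α_k K'(t_l - t_k) + β_k K''(t_l - t_k)) = 0`. -/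
def SolvesSystem (fc : ℕ) (T : Finset ℝ) (tj : ℝ) (α β : ℝ → ℝ) : Prop :=
  (∀ tl ∈ T,
      (∑ tk ∈ T, (α tk * Kker fc (tl - tk) + β tk * Kd fc 1 (tl - tk))) =
        if tl = tj then 1 else 0) ∧
  (∀ tl ∈ T,
      (∑ tk ∈ T, (α tk * Kd fc 1 (tl - tk) + β tk * Kd fc 2 (tl - tk))) = 0)

/-- The interpolating polynomial
`q_{t_j}(t) = ∑_{t_k ∈ T} (α_k K(t - t_k) + β_k K^{(1)}(t - t_k))`. -/
def qInterp (fc : ℕ) (T : Finset ℝ) (α β : ℝ → ℝ) (t : ℝ) : ℝ :=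
  ∑ tk ∈ T, (α tk * Kker fc (t - tk) + β tk * Kd fc 1 (t - tk))

/-- Signed representative of `t - s` in `[-1/2, 1/2]`. -/
def rrep (t s : ℝ) : ℝ := (t - s) - round (t - s)

lemma cdist_eq_rrep (t s : ℝ) : cdist t s = |rrep t s| := by
  unfold cdist rrep
  rw [AddCircle.norm_eq]
  simp

lemma cdist_le_rrep_sub (t s s' : ℝ) : cdist s s' ≤ |rrep t s - rrep t s'| := by
  rw [cdist_eq_rrep, ← abs_neg (rrep t s - rrep t s')]
  have h := round_le (s - s') (round (t - s') - round (t - s))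
  unfold rrep
  refine h.trans (le_of_eq ?_)
  congr 1
  push_cast
  ring

lemma rrep_le_half (t s : ℝ) : |rrep t s| ≤ 1 / 2 := abs_sub_round _

lemma abs_sin_lower (t s : ℝ) : 2 * |rrep t s| ≤ |Real.sin (Real.pi * (t - s))| := by
  have h1 : Real.pi * (t - s) = Real.pi * rrep t s + (round (t - s) : ℤ) * Real.pi := by
    unfold rrep; ring
  have h2 : |Real.sin (Real.pi * (t - s))| = |Real.sin (Real.pi * rrep t s)| := by
    rw [h1, Real.sin_add_int_mul_pi, abs_mul, abs_zpow]
    simp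
  have h3 : |Real.sin (Real.pi * rrep t s)| = |Real.sin (Real.pi * |rrep t s|)| := by
    rcases abs_cases (rrep t s) with ⟨h, _⟩ | ⟨h, _⟩
    · rw [h]
    · rw [h, mul_neg, Real.sin_neg, abs_neg]
  rw [h2, h3]
  have hp := Real.pi_pos
  have h4 := Real.mul_le_sin (x := Real.pi * |rrep t s|) (by positivity)
    (by nlinarith [rrep_le_half t s])
  have h5 : 2 / Real.pi * (Real.pi * |rrep t s|) = 2 * |rrep t s| := by field_simp
  rw [h5] at h4
  exact h4.trans (le_abs_self _)

lemma Kker_bound (fc : ℕ) (t s : ℝ) (m : ℕ) (hm : 1 ≤ m) (hmr : 2 * (m : ℝ) ≤ fc * |rrep t s|) :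
    |Kker fc (t - s)| ≤ 1 / 16 * (1 / (m : ℝ) ^ 4) := by
  have hm' : (1 : ℝ) ≤ m := by exact_mod_cast hm
  have hfc : (0 : ℝ) ≤ fc := Nat.cast_nonneg _
  have hr : 0 < |rrep t s| := by
    by_contra h
    have : |rrep t s| = 0 := le_antisymm (not_lt.mp h) (abs_nonneg _)
    rw [this] at hmr
    linarith
  have hs := abs_sin_lower t s
  have hne : Real.sin (Real.pi * (t - s)) ≠ 0 := by
    intro h
    rw [h, abs_zero] at hs
    linarith
  unfold Kker
  rw [if_neg hne, abs_pow, abs_div, abs_mul, abs_of_pos (by positivity : (0 : ℝ) < fc / 2 + 1)]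
  have hd : 2 * (m : ℝ) ≤ ((fc : ℝ) / 2 + 1) * |Real.sin (Real.pi * (t - s))| := by
    calc 2 * (m : ℝ) ≤ fc * |rrep t s| := hmr
      _ ≤ ((fc : ℝ) / 2 + 1) * (2 * |rrep t s|) := by nlinarith
      _ ≤ _ := by gcongr
  have h1 : |Real.sin (((fc : ℝ) / 2 + 1) * Real.pi * (t - s))| /
      (((fc : ℝ) / 2 + 1) * |Real.sin (Real.pi * (t - s))|) ≤ 1 / (2 * m) := by
    apply div_le_div₀ (by norm_num) (Real.abs_sin_le_one _) (by positivity) hd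
  calc _ ≤ (1 / (2 * (m : ℝ))) ^ 4 := by
        apply pow_le_pow_left₀ (by positivity) h1
    _ = _ := by field_simp; norm_num

/-- Sum over points lying on one side of `t`. -/
lemma side_sum (fc : ℕ) (hfc : 10 ≤ fc) (t : ℝ) (S : Finset ℝ)
    (hfar : ∀ s ∈ S, 2 ≤ fc * |rrep t s|)
    (hsep : ∀ s ∈ S, ∀ s' ∈ S, s ≠ s' → 2 ≤ fc * |(|rrep t s| - |rrep t s'|)|) :
    ∑ s ∈ S, |Kker fc (t - s)| ≤ 1 / 8 := by
  have hfc0 : (0 : ℝ) ≤ fc := Nat.cast_nonneg _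
  let g : ℝ → ℕ := fun s => ⌊fc * |rrep t s| / 2⌋₊
  have hg1 : ∀ s, (g s : ℝ) ≤ fc * |rrep t s| / 2 := fun s => Nat.floor_le (by positivity)
  have hg2 : ∀ s, fc * |rrep t s| / 2 < (g s : ℝ) + 1 := fun s => Nat.lt_floor_add_one _
  have hinj : Set.InjOn g S := by
    intro s hs s' hs' h
    by_contra hne
    have h1 := hsep s hs s' hs' hne
    have a1 := hg1 s
    have a2 := hg2 s
    have b1 := hg1 s'
    have b2 := hg2 s'
    rw [h] at a1 a2
    rcases abs_cases (|rrep t s| - |rrep t s'|) with ⟨e, _⟩ | ⟨e, _⟩ <;> rw [e] at h1 <;> nlinarith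
  have hsum : ∑ m ∈ S.image g, 1 / (m : ℝ) ^ 4 ≤ 2 := by
    have h := sum_le_hasSum (S.image g) (fun i _ => by positivity) hasSum_zeta_four
    refine h.trans ?_
    have hp : Real.pi ^ 4 ≤ 3.15 ^ 4 :=
      pow_le_pow_left₀ Real.pi_pos.le Real.pi_lt_d2.le 4
    norm_num at hp
    linarith
  calc ∑ s ∈ S, |Kker fc (t - s)| ≤ ∑ s ∈ S, 1 / 16 * (1 / (g s : ℝ) ^ 4) := by
        apply Finset.sum_le_sum
        intro s hs
        apply Kker_bound
        · apply Nat.le_floor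
          have := hfar s hs
          push_cast
          linarith
        · linarith [hg1 s]
    _ = 1 / 16 * ∑ m ∈ S.image g, 1 / (m : ℝ) ^ 4 := by
        rw [Finset.sum_image hinj, Finset.mul_sum]
    _ ≤ 1 / 8 := by linarith

/-- if `Δ(T) ≥ 2/f_c` and `t_a, t_b` are the two elements of `T` nearest
to `t`, then `∑_{t_k ∈ T \ {t_a, t_b}} |K(t - t_k)| ≤ 1.083`. -/
theorem kernel_tail_sum
    (fc : ℕ) (hfc : 10 ≤ fc)
    (T : Finset ℝ) (hT : ↑T ⊆ Set.Ico (0 : ℝ) 1)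
    (hsep : HasMinSep T (2 * (1 / (fc : ℝ))))
    (t ta tb : ℝ) (hta : ta ∈ T) (htb : tb ∈ T) (hab : ta ≠ tb)
    (hnearest : ∀ s ∈ T, s ≠ ta → s ≠ tb →
      cdist t ta ≤ cdist t s ∧ cdist t tb ≤ cdist t s) :
    ∑ tk ∈ (T.erase ta).erase tb, |Kker fc (t - tk)| ≤ 1.083 := by
  have hfc' : (10 : ℝ) ≤ fc := by exact_mod_cast hfc
  have hpos : (0 : ℝ) < fc := by linarith
  have hsep' : ∀ s ∈ T, ∀ s' ∈ T, s ≠ s' → 2 ≤ fc * |rrep t s - rrep t s'| := by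
    intro s hs s' hs' hne
    have h := (hsep s hs s' hs' hne).trans (cdist_le_rrep_sub t s s')
    calc (2 : ℝ) = fc * (2 * (1 / (fc : ℝ))) := by field_simp
      _ ≤ _ := by gcongr
  have hmem : ∀ s ∈ (T.erase ta).erase tb, s ∈ T ∧ s ≠ ta ∧ s ≠ tb := by
    intro s hs
    simp only [Finset.mem_erase] at hs
    exact ⟨hs.2.2, hs.2.1, hs.1⟩
  have hfar : ∀ s ∈ (T.erase ta).erase tb, 2 ≤ fc * |rrep t s| := by
    intro s hs
    obtain ⟨hsT, hsa, hsb⟩ := hmem s hs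
    obtain ⟨na, nb⟩ := hnearest s hsT hsa hsb
    rw [cdist_eq_rrep, cdist_eq_rrep] at na nb
    have key : |rrep t s - rrep t ta| ≤ |rrep t s| ∨ |rrep t s - rrep t tb| ≤ |rrep t s| ∨
        |rrep t ta - rrep t tb| ≤ |rrep t s| := by
      generalize rrep t s = x at *
      generalize rrep t ta = a at *
      generalize rrep t tb = b at *
      rcases le_total 0 x with hx | hx <;> rcases le_total 0 a with ha | ha <;>
      rcases le_total 0 b with hb | hb <;>
      simp only [abs_of_nonneg, abs_of_nonpos, hx, ha, hb] at na nb ⊢ <;>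
      first
      | (left; rw [abs_le]; constructor <;> linarith)
      | (right; left; rw [abs_le]; constructor <;> linarith)
      | (right; right; rw [abs_le]; constructor <;> linarith)
    rcases key with h | h | h
    · exact (hsep' s hsT ta hta hsa).trans (by gcongr)
    · exact (hsep' s hsT tb htb hsb).trans (by gcongr)
    · exact (hsep' ta hta tb htb hab).trans (by gcongr)
  rw [← Finset.sum_filter_add_sum_filter_not _ (fun s => 0 ≤ rrep t s)]
  have h1 := side_sum fc hfc t (((T.erase ta).erase tb).filter (fun s => 0 ≤ rrep t s))
    (fun s hs => hfar s (Finset.mem_filter.mp hs).1) (by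
      intro s hs s' hs' hne
      rw [Finset.mem_filter] at hs hs'
      rw [abs_of_nonneg hs.2, abs_of_nonneg hs'.2]
      exact hsep' s (hmem s hs.1).1 s' (hmem s' hs'.1).1 hne)
  have h2 := side_sum fc hfc t (((T.erase ta).erase tb).filter (fun s => ¬ 0 ≤ rrep t s))
    (fun s hs => hfar s (Finset.mem_filter.mp hs).1) (by
      intro s hs s' hs' hne
      rw [Finset.mem_filter] at hs hs'
      rw [abs_of_neg (not_le.mp hs.2), abs_of_neg (not_le.mp hs'.2)]
      have := hsep' s' (hmem s' hs'.1).1 s (hmem s hs.1).1 (Ne.symm hne)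
      convert this using 3
      ring)
  norm_num at h1 h2 ⊢
  linarith
end
end

section
/- Let f_c ≥ 10 be an integer, λ_c = 1/f_c, and let T ⊂ 𝕋 be a finite set with minimum separation Δ(T) ≥ 2/f_c. Let t ∈ 𝕋 and let t_a, t_b be the two elements of T nearest to t. Then Σ_{t_k ∈ T \ {t_a, t_b}} |K^{(1)}(t − t_k)| ≤ 1.75 f_c. -/
open Finset

noncomputable section

lemma aux_sum (S : Finset ℝ) (y : ℝ → ℝ) (h1 : ∀ s ∈ S, 1 ≤ y s)
    (h2 : ∀ s ∈ S, ∀ s' ∈ S, s ≠ s' → 1 ≤ |y s - y s'|) :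
    ∑ s ∈ S, 1 / (y s) ^ 4 ≤ 1.1 := by
  have hinj : Set.InjOn (fun s => ⌊y s⌋₊) (S : Set ℝ) := by
    intro s hs s' hs' h
    by_contra hne
    have h3 := h2 s hs s' hs' hne
    have ha := Nat.floor_le (by linarith [h1 s hs] : 0 ≤ y s)
    have hb := Nat.floor_le (by linarith [h1 s' hs'] : 0 ≤ y s')
    have hc := Nat.lt_floor_add_one (y s)
    have hd := Nat.lt_floor_add_one (y s')
    simp only at h
    rw [h] at ha hc
    have : |y s - y s'| < 1 := by rw [abs_lt]; constructor <;> linarith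
    linarith
  calc ∑ s ∈ S, 1 / (y s) ^ 4 ≤ ∑ s ∈ S, 1 / ((⌊y s⌋₊ : ℕ) : ℝ) ^ 4 := by
        apply Finset.sum_le_sum
        intro s hs
        have ha := Nat.floor_le (by linarith [h1 s hs] : 0 ≤ y s)
        have hb : (1 : ℝ) ≤ (⌊y s⌋₊ : ℕ) := by
          exact_mod_cast (Nat.one_le_floor_iff (y s)).2 (h1 s hs)
        apply one_div_le_one_div_of_le (by positivity)
        gcongr
    _ = ∑ j ∈ S.image (fun s => ⌊y s⌋₊), 1 / (j : ℝ) ^ 4 := by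
        rw [Finset.sum_image hinj]
    _ ≤ Real.pi ^ 4 / 90 :=
        sum_le_hasSum _ (fun i _ => by positivity) hasSum_zeta_four
    _ ≤ 1.1 := by
        have h3 := Real.pi_lt_d2
        have : Real.pi ^ 4 ≤ 3.15 ^ 4 := by gcongr
        norm_num at this ⊢
        linarith

lemma aux_deriv (N u : ℝ) (hN : 0 < N) (hs : Real.sin (Real.pi * u) ≠ 0) :
    |deriv (fun t => if Real.sin (Real.pi * t) = 0 then (1 : ℝ)
      else (Real.sin (N * Real.pi * t) / (N * Real.sin (Real.pi * t))) ^ 4) u| ≤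
    4 * Real.pi / (N ^ 3 * |Real.sin (Real.pi * u)| ^ 4) *
      (1 + 1 / (N * |Real.sin (Real.pi * u)|)) := by
  have hev : (fun t => if Real.sin (Real.pi * t) = 0 then (1 : ℝ)
      else (Real.sin (N * Real.pi * t) / (N * Real.sin (Real.pi * t))) ^ 4) =ᶠ[nhds u]
      (fun t => (Real.sin (N * Real.pi * t) / (N * Real.sin (Real.pi * t))) ^ 4) := by
    have hc : Continuous (fun t => Real.sin (Real.pi * t)) := by fun_prop
    filter_upwards [hc.continuousAt.eventually_ne hs] with t ht
    simp [ht]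
  rw [hev.deriv_eq]
  have d1 : HasDerivAt (fun t => Real.sin (N * Real.pi * t))
      (Real.cos (N * Real.pi * u) * (N * Real.pi * 1)) u :=
    ((hasDerivAt_id u).const_mul (N * Real.pi)).sin
  have d2 : HasDerivAt (fun t => N * Real.sin (Real.pi * t))
      (N * (Real.cos (Real.pi * u) * (Real.pi * 1))) u :=
    (((hasDerivAt_id u).const_mul Real.pi).sin).const_mul N
  have d3 := (d1.fun_div d2 (mul_ne_zero hN.ne' hs)).fun_pow 4
  rw [d3.deriv]
  have e1 := Real.abs_sin_le_one (N * Real.pi * u)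
  have e2 := Real.abs_cos_le_one (N * Real.pi * u)
  have e3 := Real.abs_cos_le_one (Real.pi * u)
  generalize Real.sin (N * Real.pi * u) = a at *
  generalize Real.cos (N * Real.pi * u) = b at *
  generalize Real.cos (Real.pi * u) = c at *
  generalize Real.sin (Real.pi * u) = s at *
  have hp := Real.pi_pos
  have hs' : 0 < |s| := abs_pos.2 hs
  have key : ((4 : ℕ) : ℝ) * (a / (N * s)) ^ (4 - 1) *
      ((b * (N * Real.pi * 1) * (N * s) - a * (N * (c * (Real.pi * 1)))) / (N * s) ^ 2)
      = 4 * Real.pi / (N ^ 3 * s ^ 4) * (a ^ 3 * (b - a * c / (N * s))) := by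
    push_cast
    field_simp
  rw [key, abs_mul, abs_mul, abs_div, abs_mul, abs_mul, abs_pow, abs_pow, abs_pow,
    abs_of_pos hp, abs_of_pos hN, abs_of_pos (by norm_num : (0 : ℝ) < 4)]
  gcongr
  have h1 : |b - a * c / (N * s)| ≤ 1 + 1 / (N * |s|) := by
    refine (abs_sub _ _).trans ?_
    rw [abs_div, abs_mul, abs_mul, abs_of_pos hN]
    gcongr
    exact mul_le_one₀ e1 (abs_nonneg _) e3
  calc |a| ^ 3 * |b - a * c / (N * s)| ≤ 1 * (1 + 1 / (N * |s|)) := by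
        gcongr
        exact pow_le_one₀ (abs_nonneg _) e1
    _ = _ := one_mul _

lemma aux_sin (u : ℝ) : 2 * |u - round u| ≤ |Real.sin (Real.pi * u)| := by
  have h := abs_sub_round u
  have hp := Real.pi_pos
  have e : |Real.sin (Real.pi * u)| = |Real.sin (Real.pi * (u - round u))| := by
    have : Real.pi * (u - round u) = Real.pi * u - (round u : ℤ) * Real.pi := by ring
    rw [this, Real.sin_sub_int_mul_pi]
    simp [abs_mul]
  rw [e]
  have h3 := Real.mul_abs_le_abs_sin (x := Real.pi * (u - round u)) (by
    rw [abs_mul, abs_of_pos hp]; nlinarith)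
  rw [abs_mul, abs_of_pos hp] at h3
  refine le_trans (le_of_eq ?_) h3
  field_simp

lemma aux_Kd (fc : ℕ) (hfc : 10 ≤ fc) (u y : ℝ) (hy : y = |u - round u| * (fc / 2))
    (h1 : 1 ≤ y) : |Kd fc 1 u| ≤ (fc : ℝ) * (3 * Real.pi / 16) * (1 / y ^ 4) := by
  have hf : (10 : ℝ) ≤ fc := by exact_mod_cast hfc
  have hp := Real.pi_pos
  have hs := aux_sin u
  have hd : |u - round u| = 2 * y / fc := by rw [hy]; field_simp
  rw [hd] at hs
  have hpos : 0 < 2 * (2 * y / fc) := by positivity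
  have hne : Real.sin (Real.pi * u) ≠ 0 := abs_pos.1 (hpos.trans_le hs)
  have h := aux_deriv ((fc : ℝ) / 2 + 1) u (by positivity) hne
  have e : Kd fc 1 u = deriv (fun t => if Real.sin (Real.pi * t) = 0 then (1 : ℝ)
      else (Real.sin (((fc : ℝ) / 2 + 1) * Real.pi * t) /
        (((fc : ℝ) / 2 + 1) * Real.sin (Real.pi * t))) ^ 4) u := by
    rw [Kd, iteratedDeriv_one]; rfl
  rw [e]
  refine h.trans ?_
  calc _ ≤ 4 * Real.pi / (((fc : ℝ) / 2) ^ 3 * (2 * (2 * y / fc)) ^ 4) *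
      (1 + 1 / ((fc : ℝ) / 2 * (2 * (2 * y / fc)))) := by
        gcongr <;> linarith
    _ = (fc : ℝ) * (Real.pi / 8) * (1 / y ^ 4) * (1 + 1 / (2 * y)) := by
        field_simp
        try ring
    _ ≤ (fc : ℝ) * (Real.pi / 8) * (1 / y ^ 4) * (1 + 1 / (2 * 1)) := by gcongr
    _ = _ := by ring

/-- if `Δ(T) ≥ 2/f_c` and `t_a, t_b` are the two elements of `T` nearest
to `t`, then `∑_{t_k ∈ T \ {t_a, t_b}} |K^{(1)}(t - t_k)| ≤ 1.75 f_c`. -/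
theorem kernel_deriv_tail_sum
    (fc : ℕ) (hfc : 10 ≤ fc)
    (T : Finset ℝ) (hT : ↑T ⊆ Set.Ico (0 : ℝ) 1)
    (hsep : HasMinSep T (2 * (1 / (fc : ℝ))))
    (t ta tb : ℝ) (hta : ta ∈ T) (htb : tb ∈ T) (hab : ta ≠ tb)
    (hnearest : ∀ s ∈ T, s ≠ ta → s ≠ tb →
      cdist t ta ≤ cdist t s ∧ cdist t tb ≤ cdist t s) :
    ∑ tk ∈ (T.erase ta).erase tb, |Kd fc 1 (t - tk)| ≤ 1.75 * (fc : ℝ) := by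
  have hf : (10 : ℝ) ≤ fc := by exact_mod_cast hfc
  obtain ⟨r, hr⟩ : ∃ r : ℝ → ℝ, ∀ s, r s = ((t - s) - round (t - s)) * (fc / 2) :=
    ⟨_, fun _ => rfl⟩
  have hcd : ∀ s, |r s| = cdist t s * (fc / 2) := by
    intro s
    rw [hr, cdist, UnitAddCircle.norm_eq, abs_mul, abs_of_pos (by positivity : (0 : ℝ) < fc / 2)]
  have hrsep : ∀ s ∈ T, ∀ s' ∈ T, s ≠ s' → 1 ≤ |r s - r s'| := by
    intro s hs s' hs' hne
    have h := hsep s hs s' hs' hne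
    rw [cdist, UnitAddCircle.norm_eq] at h
    have h2 := round_le (s - s') (round (t - s') - round (t - s))
    have h3 : |r s - r s'| =
        |s - s' - ((round (t - s') - round (t - s) : ℤ) : ℝ)| * (fc / 2) := by
      rw [← abs_of_pos (by positivity : (0 : ℝ) < fc / 2), ← abs_mul, ← abs_neg, hr, hr]
      congr 1
      push_cast
      ring
    rw [h3]
    calc (1 : ℝ) = 2 * (1 / (fc : ℝ)) * (fc / 2) := by field_simp
      _ ≤ _ := by gcongr; exact h.trans h2
  have hone : ∀ s ∈ (T.erase ta).erase tb, s ∈ T ∧ 1 ≤ |r s| := by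
    intro s hs
    simp only [Finset.mem_erase] at hs
    obtain ⟨hsb, hsa, hsT⟩ := hs
    refine ⟨hsT, ?_⟩
    by_contra! hlt
    have hn := hnearest s hsT hsa hsb
    have ha : |r ta| < 1 := by
      refine lt_of_le_of_lt ?_ hlt
      rw [hcd, hcd]; gcongr; exact hn.1
    have hb : |r tb| < 1 := by
      refine lt_of_le_of_lt ?_ hlt
      rw [hcd, hcd]; gcongr; exact hn.2
    have g1 := hrsep s hsT ta hta hsa
    have g2 := hrsep s hsT tb htb hsb
    have g3 := hrsep ta hta tb htb hab
    rw [abs_lt] at ha hb hlt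
    rw [le_abs] at g1 g2 g3
    rcases g1 with g1 | g1 <;> rcases g2 with g2 | g2 <;> rcases g3 with g3 | g3 <;> linarith
  have hbound : ∑ tk ∈ (T.erase ta).erase tb, |Kd fc 1 (t - tk)| ≤
      ∑ tk ∈ (T.erase ta).erase tb, (fc : ℝ) * (3 * Real.pi / 16) * (1 / |r tk| ^ 4) := by
    apply Finset.sum_le_sum
    intro s hs
    apply aux_Kd fc hfc _ _ _ (hone s hs).2
    rw [hr, abs_mul, abs_of_pos (by positivity : (0 : ℝ) < fc / 2)]
  refine hbound.trans ?_
  rw [← Finset.mul_sum, ← Finset.sum_filter_add_sum_filter_not _ (fun s => 0 ≤ r s)]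
  have s1 := aux_sum (((T.erase ta).erase tb).filter (fun s => 0 ≤ r s)) (fun s => |r s|)
    (fun s hs => (hone s (Finset.mem_filter.1 hs).1).2) (by
      intro s hs s' hs' hne
      rw [Finset.mem_filter] at hs hs'
      simp only [abs_of_nonneg hs.2, abs_of_nonneg hs'.2]
      exact hrsep s (hone s hs.1).1 s' (hone s' hs'.1).1 hne)
  have s2 := aux_sum (((T.erase ta).erase tb).filter (fun s => ¬ 0 ≤ r s)) (fun s => |r s|)
    (fun s hs => (hone s (Finset.mem_filter.1 hs).1).2) (by
      intro s hs s' hs' hne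
      rw [Finset.mem_filter, not_le] at hs hs'
      simp only [abs_of_neg hs.2, abs_of_neg hs'.2]
      have := hrsep s (hone s hs.1).1 s' (hone s' hs'.1).1 hne
      rw [← abs_neg] at this
      convert this using 2
      ring)
  have hp := Real.pi_lt_d2
  calc _ ≤ (fc : ℝ) * (3 * 3.15 / 16) * (1.1 + 1.1) := by gcongr
    _ ≤ _ := by norm_num; linarith
end
end

section
/- Let f_c ≥ 10 be an integer, n = 2f_c+1, λ_c = 1/f_c, c = 0.1649, and suppose Δ(T) ≥ 2λ_c. Let C_a, C_b be the constants of the dual-polynomial lemma (so that for v_j = conj(a_j)/|a_j| there is a low-pass polynomial q of cut-off f_c with q(t_j) = v_j on T, |q(t)| < 1 − C_a when |t − t_j| > cλ_c for all t_j ∈ T, and |q(t)| ≤ 1 − C_b (t − t_j)²/λ_c² when |t − t_j| ≤ cλ_c). Then for this q and any solution x̂ = Σ_k â_k δ_{t̂_k} of the total-variation minimization program: ∫_𝕋 q(t) x̂(dt) ≥ ‖x̂‖_TV − 2δ. -/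
open Finset

noncomputable section

/-- The complex exponential `e^{i 2 π k t}`. -/
def efun (k : ℤ) (t : ℝ) : ℂ :=
  Complex.exp (2 * (Real.pi : ℂ) * Complex.I * (k : ℂ) * (t : ℂ))

/-- The measurement map `F_n`: the `k`-th Fourier coefficient
`∫ e^{-i 2 π k t} μ(dt)` of the finite atomic complex measure `μ = ∑_{t ∈ S} a t δ_t`. -/
def Fmeas (fc : ℕ) (S : Finset ℝ) (a : ℝ → ℂ) (k : ℤ) : ℂ :=
  ∑ t ∈ S, a t * efun (-k) t

/-- The `ℓ₂` norm of a vector in `ℂ^n`, `n = 2 f_c + 1`, indexed by `k ∈ {-f_c, …, f_c}`. -/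
def l2norm (fc : ℕ) (v : ℤ → ℂ) : ℝ :=
  Real.sqrt (∑ k ∈ Finset.Icc (-(fc : ℤ)) (fc : ℤ), ‖v k‖ ^ 2)

/-- Total-variation norm of the finite atomic complex measure `∑_{t ∈ S} a t δ_t`. -/
def tvnorm (S : Finset ℝ) (a : ℝ → ℂ) : ℝ := ∑ t ∈ S, ‖a t‖

/-- Feasibility for the data constraint: `‖F_n x̃ - y‖₂ ≤ δ`. -/
def Feasible (fc : ℕ) (δ : ℝ) (y : ℤ → ℂ) (S : Finset ℝ) (a : ℝ → ℂ) : Prop :=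
  l2norm fc (fun k => Fmeas fc S a k - y k) ≤ δ

/-- `∑_{t ∈ Sh} ah t δ_t` is a solution of the TV-norm minimization program:
it is supported on `[0,1)`, feasible, and its TV norm is at most that of any
feasible finite (atomic) complex measure supported on `[0,1)`. -/
def IsSolution (fc : ℕ) (δ : ℝ) (y : ℤ → ℂ) (Sh : Finset ℝ) (ah : ℝ → ℂ) : Prop :=
  ↑Sh ⊆ Set.Ico (0 : ℝ) 1 ∧ Feasible fc δ y Sh ah ∧
    ∀ (S' : Finset ℝ) (a' : ℝ → ℂ), ↑S' ⊆ Set.Ico (0 : ℝ) 1 →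
      Feasible fc δ y S' a' → tvnorm Sh ah ≤ tvnorm S' a'

/-- The trigonometric (low-pass) polynomial `t ↦ ∑_{k=-f_c}^{f_c} b_k e^{i 2 π k t}`. -/
def trigPoly (fc : ℕ) (b : ℤ → ℂ) (t : ℝ) : ℂ :=
  ∑ k ∈ Finset.Icc (-(fc : ℤ)) (fc : ℤ), b k * efun k t

lemma coeff_sq_sum_le (fc : ℕ) (d : ℤ → ℂ) (h : ∀ t : ℝ, ‖trigPoly fc d t‖ ≤ 1) :
    ∑ k ∈ Finset.Icc (-(fc : ℤ)) (fc : ℤ), ‖d k‖ ^ 2 ≤ 1 := by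
  haveI : Fact (0 < (1 : ℝ)) := ⟨one_pos⟩
  let f : C(AddCircle (1 : ℝ), ℂ) := ∑ k ∈ Finset.Icc (-(fc : ℤ)) (fc : ℤ), d k • fourier k
  have hf : ‖f‖ ≤ 1 := by
    rw [ContinuousMap.norm_le _ zero_le_one]
    intro x
    induction x using QuotientAddGroup.induction_on with
    | H t =>
      have h1 : f (t : AddCircle (1 : ℝ)) = trigPoly fc d t := by
        simp only [f, ContinuousMap.sum_apply, ContinuousMap.smul_apply, trigPoly, smul_eq_mul]
        refine Finset.sum_congr rfl fun k _ => ?_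
        rw [fourier_coe_apply, efun]
        simp
      have h2 := h t
      rw [← h1] at h2
      exact h2
  let L := ContinuousMap.toLp (E := ℂ) 2 (AddCircle.haarAddCircle (T := (1 : ℝ))) ℂ
  have hL : ‖L f‖ ≤ 1 := by
    have h1 : ‖L‖ ≤ 1 := by
      have := ContinuousMap.toLp_norm_le (E := ℂ) (𝕜 := ℂ) (p := 2)
        (μ := AddCircle.haarAddCircle (T := (1 : ℝ)))
      simpa [MeasureTheory.measureUnivNNReal] using this
    calc ‖L f‖ ≤ ‖L‖ * ‖f‖ := L.le_opNorm f
      _ ≤ 1 * 1 := mul_le_mul h1 hf (norm_nonneg _) zero_le_one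
      _ = 1 := one_mul 1
  have hLf : L f = ∑ k ∈ Finset.Icc (-(fc : ℤ)) (fc : ℤ), d k • fourierLp (T := (1 : ℝ)) 2 k := by
    simp only [f, map_sum, map_smul]
    rfl
  have hin := (orthonormal_fourier (T := (1 : ℝ))).inner_sum d d (Finset.Icc (-(fc : ℤ)) (fc : ℤ))
  rw [← hLf, inner_self_eq_norm_sq_to_K] at hin
  have heq : ‖L f‖ ^ 2 = ∑ k ∈ Finset.Icc (-(fc : ℤ)) (fc : ℤ), ‖d k‖ ^ 2 := by
    have h3 : (((‖L f‖ ^ 2 : ℝ)) : ℂ) =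
        ((∑ k ∈ Finset.Icc (-(fc : ℤ)) (fc : ℤ), ‖d k‖ ^ 2 : ℝ) : ℂ) := by
      push_cast
      refine Eq.trans hin ?_
      refine Finset.sum_congr rfl fun k _ => ?_
      rw [Complex.conj_mul']
    exact_mod_cast h3
  rw [← heq]
  exact pow_le_one₀ (norm_nonneg _) hL

lemma integral_eq (fc : ℕ) (d : ℤ → ℂ) (S : Finset ℝ) (b : ℝ → ℂ) :
    ∑ t ∈ S, b t * trigPoly fc d t =
      ∑ k ∈ Finset.Icc (-(fc : ℤ)) (fc : ℤ), d k * Fmeas fc S b (-k) := by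
  simp only [trigPoly, Fmeas, Finset.mul_sum, neg_neg]
  rw [Finset.sum_comm]
  exact Finset.sum_congr rfl fun k _ => Finset.sum_congr rfl fun t _ => by ring

lemma pairing_le (fc : ℕ) (d w : ℤ → ℂ) (δ : ℝ)
    (hd : ∑ k ∈ Finset.Icc (-(fc : ℤ)) (fc : ℤ), ‖d k‖ ^ 2 ≤ 1) (hw : l2norm fc w ≤ δ) :
    ‖∑ k ∈ Finset.Icc (-(fc : ℤ)) (fc : ℤ), d k * w (-k)‖ ≤ δ := by
  have hneg : ∑ k ∈ Finset.Icc (-(fc : ℤ)) (fc : ℤ), ‖w (-k)‖ ^ 2 =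
      ∑ k ∈ Finset.Icc (-(fc : ℤ)) (fc : ℤ), ‖w k‖ ^ 2 := by
    refine Finset.sum_nbij' (fun k => -k) (fun k => -k) ?_ ?_ ?_ ?_ ?_
    · intro k hk
      simp only [Finset.mem_Icc] at hk ⊢
      omega
    · intro k hk
      simp only [Finset.mem_Icc] at hk ⊢
      omega
    · intro k _
      simp
    · intro k _
      simp
    · intro k _
      simp
  have h1 := Real.sum_mul_le_sqrt_mul_sqrt (Finset.Icc (-(fc : ℤ)) (fc : ℤ))
    (fun k => ‖d k‖) (fun k => ‖w (-k)‖)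
  rw [hneg] at h1
  calc _ ≤ ∑ k ∈ Finset.Icc (-(fc : ℤ)) (fc : ℤ), ‖d k * w (-k)‖ := norm_sum_le _ _
    _ = ∑ k ∈ Finset.Icc (-(fc : ℤ)) (fc : ℤ), ‖d k‖ * ‖w (-k)‖ := by simp only [norm_mul]
    _ ≤ _ := h1
    _ ≤ 1 * l2norm fc w :=
      mul_le_mul_of_nonneg_right (Real.sqrt_le_one.mpr hd) (Real.sqrt_nonneg _)
    _ ≤ δ := by rw [one_mul]; exact hw

/-- let `q` be a dual polynomial with the properties of Lemma 2.3 for the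
sign pattern `v_j = conj(a_j)/|a_j|` (constants `C_a, C_b`, `0 < c² C_b ≤ C_a < 1`). Then
for any solution `x̂ = ∑ ah_k δ_{th_k}` of the TV minimization program,
`∫_𝕋 q dx̂ ≥ ‖x̂‖_TV - 2δ`. -/
theorem dual_polynomial_integral_lower_bound
    (fc : ℕ) (hfc : 10 ≤ fc)
    (T : Finset ℝ) (hT : ↑T ⊆ Set.Ico (0 : ℝ) 1)
    (hsep : HasMinSep T (2 * (1 / (fc : ℝ))))
    (a : ℝ → ℂ) (ha : ∀ t ∈ T, a t ≠ 0)
    (z : ℤ → ℂ) (δ : ℝ) (hδ : 0 ≤ δ) (hz : l2norm fc z ≤ δ)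
    (Ca Cb : ℝ) (hCb : 0 < (0.1649 : ℝ) ^ 2 * Cb)
    (hCab : (0.1649 : ℝ) ^ 2 * Cb ≤ Ca) (hCa : Ca < 1)
    (d : ℤ → ℂ)
    (hinterp : ∀ t_j ∈ T,
      trigPoly fc d t_j = (starRingEnd ℂ) (a t_j) / (‖a t_j‖ : ℂ))
    (hfar : ∀ t : ℝ, (∀ t_j ∈ T, 0.1649 * (1 / (fc : ℝ)) < cdist t t_j) →
      ‖trigPoly fc d t‖ < 1 - Ca)
    (hnear : ∀ t : ℝ, ∀ t_j ∈ T, cdist t t_j ≤ 0.1649 * (1 / (fc : ℝ)) →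
      ‖trigPoly fc d t‖ ≤ 1 - Cb * (cdist t t_j) ^ 2 / (1 / (fc : ℝ)) ^ 2)
    (Sh : Finset ℝ) (ah : ℝ → ℂ)
    (hsol : IsSolution fc δ (fun k => Fmeas fc T a k + z k) Sh ah) :
    (∑ t ∈ Sh, ah t * trigPoly fc d t).re ≥ tvnorm Sh ah - 2 * δ := by
  obtain ⟨_, hfeas, hmin⟩ := hsol
  have hCb' : 0 < Cb := by
    by_contra hc
    have : (0.1649 : ℝ) ^ 2 * Cb ≤ 0 := mul_nonpos_of_nonneg_of_nonpos (by positivity) (not_lt.mp hc)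
    linarith
  have hq : ∀ t : ℝ, ‖trigPoly fc d t‖ ≤ 1 := by
    intro t
    by_cases hf : ∀ t_j ∈ T, 0.1649 * (1 / (fc : ℝ)) < cdist t t_j
    · have := hfar t hf
      linarith
    · push Not at hf
      obtain ⟨t_j, hj, hle⟩ := hf
      have h1 := hnear t t_j hj hle
      have h2 : 0 ≤ Cb * (cdist t t_j) ^ 2 / (1 / (fc : ℝ)) ^ 2 := by positivity
      linarith
  have hd := coeff_sq_sum_le fc d hq
  have hxint : (∑ t ∈ T, a t * trigPoly fc d t) = ((tvnorm T a : ℝ) : ℂ) := by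
    rw [tvnorm, Complex.ofReal_sum]
    refine Finset.sum_congr rfl fun t ht => ?_
    have hne : ((‖a t‖ : ℝ) : ℂ) ≠ 0 := by
      simpa using ha t ht
    rw [hinterp t ht, ← mul_div_assoc, Complex.mul_conj', div_eq_iff hne, sq]
  have hxfeas : Feasible fc δ (fun k => Fmeas fc T a k + z k) T a := by
    unfold Feasible
    have : l2norm fc (fun k => Fmeas fc T a k - (Fmeas fc T a k + z k)) = l2norm fc z := by
      simp [l2norm]
    rw [this]
    exact hz
  have hle := hmin T a hT hxfeas
  have e1 := pairing_le fc d _ δ hd hfeas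
  have e2 := pairing_le fc d z δ hd hz
  have hsplit : (∑ t ∈ Sh, ah t * trigPoly fc d t) = ((tvnorm T a : ℝ) : ℂ) +
      (∑ k ∈ Finset.Icc (-(fc : ℤ)) (fc : ℤ),
        d k * (Fmeas fc Sh ah (-k) - (Fmeas fc T a (-k) + z (-k)))) +
      ∑ k ∈ Finset.Icc (-(fc : ℤ)) (fc : ℤ), d k * z (-k) := by
    rw [← hxint, integral_eq, integral_eq, ← Finset.sum_add_distrib, ← Finset.sum_add_distrib]
    exact Finset.sum_congr rfl fun k _ => by ring
  rw [hsplit, Complex.add_re, Complex.add_re, Complex.ofReal_re]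
  have r1 := (abs_le.mp ((Complex.abs_re_le_norm _).trans e1)).1
  have r2 := (abs_le.mp ((Complex.abs_re_le_norm _).trans e2)).1
  linarith
end
end
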